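/- Let p be a positive rational number with √p irrational, let a, b be rational numbers, and set x = a + b√p. If x > 0 and a − b√p < 0, then b√p − a ∈ B(x), and moreover q·√p ∈ B(x) for every positive rational number q. -/

import Mathlib

/-- `R` is an axis-parallel closed rectangle with side lengths `w` (horizontal)
and `h` (vertical), both positive. -/
def IsRect (R : Set (ℝ × ℝ)) (w h : ℝ) : Prop :=
  0 < w ∧ 0 < h ∧ ∃ x y : ℝ, R = Set.Icc x (x + w) ×ˢ Set.Icc y (y + h)

/-- The rectangle `R` is tiled by finitely many axis-parallel rectangles, each of
whose side ratios belongs to `ratios`: the tiles cover `R` and have pairwise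
disjoint interiors. -/
def TiledBy (R : Set (ℝ × ℝ)) (ratios : Set ℝ) : Prop :=
  ∃ (m : ℕ) (T : Fin m → Set (ℝ × ℝ)) (w h : Fin m → ℝ),
    (∀ i, IsRect (T i) (w i) (h i)) ∧
    (∀ i, w i / h i ∈ ratios ∨ h i / w i ∈ ratios) ∧
    (⋃ i, T i) = R ∧
    Pairwise fun i j => Disjoint (interior (T i)) (interior (T j))

/-- `BSet ratios` is the set of positive reals `z` such that some axis-parallel
rectangle with side ratio `z` can be tiled by finitely many axis-parallel
rectangles each of whose side ratio belongs to `ratios`. -/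
def BSet (ratios : Set ℝ) : Set ℝ :=
  {z | ∃ (W H : ℝ) (R : Set (ℝ × ℝ)),
    IsRect R W H ∧ (z = W / H ∨ z = H / W) ∧ TiledBy R ratios}

theorem tiledBy_union {R S : Set (ℝ × ℝ)} {r : Set ℝ} (hR : TiledBy R r) (hS : TiledBy S r)
    (hd : Disjoint (interior R) (interior S)) : TiledBy (R ∪ S) r := by
  obtain ⟨m, T, w, h, h1, h2, h3, h4⟩ := hR
  obtain ⟨n, U, w', h', k1, k2, k3, k4⟩ := hS
  have hT : ∀ i, interior (T i) ⊆ interior R := fun i =>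
    interior_mono (h3 ▸ Set.subset_iUnion T i)
  have hU : ∀ i, interior (U i) ⊆ interior S := fun i =>
    interior_mono (k3 ▸ Set.subset_iUnion U i)
  refine ⟨m + n, fun i => Sum.elim T U (finSumFinEquiv.symm i),
    fun i => Sum.elim w w' (finSumFinEquiv.symm i),
    fun i => Sum.elim h h' (finSumFinEquiv.symm i), ?_, ?_, ?_, ?_⟩
  · intro i
    beta_reduce
    rcases finSumFinEquiv.symm i with j | j
    · exact h1 j
    · exact k1 j
  · intro i
    beta_reduce
    rcases finSumFinEquiv.symm i with j | j
    · exact h2 j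
    · exact k2 j
  · rw [← h3, ← k3, finSumFinEquiv.symm.surjective.iUnion_comp (Sum.elim T U), Set.iUnion_sum]
    rfl
  · intro i j hij
    have hij' : finSumFinEquiv.symm i ≠ finSumFinEquiv.symm j :=
      fun e => hij (finSumFinEquiv.symm.injective e)
    revert hij'
    show _ → Disjoint (interior (Sum.elim T U (finSumFinEquiv.symm i)))
      (interior (Sum.elim T U (finSumFinEquiv.symm j)))
    rcases finSumFinEquiv.symm i with a | a <;> rcases finSumFinEquiv.symm j with b | b <;> intro hne
    · exact h4 (fun e => hne (by rw [e]))
    · exact hd.mono (hT a) (hU b)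
    · exact (hd.mono (hT b) (hU a)).symm
    · exact k4 (fun e => hne (by rw [e]))

/-- Every translate of the `W × H` rectangle can be tiled. -/
def Tl (x W H : ℝ) : Prop :=
  ∀ u v : ℝ, TiledBy (Set.Icc u (u + W) ×ˢ Set.Icc v (v + H)) {x}

theorem Tl_base {x W H : ℝ} (hW : 0 < W) (hH : 0 < H) (h : W / H = x ∨ H / W = x) : Tl x W H := by
  intro u v
  refine ⟨1, fun _ => _, fun _ => W, fun _ => H, fun _ => ⟨hW, hH, u, v, rfl⟩, fun _ => h, ?_, ?_⟩
  · exact Set.iUnion_const _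
  · intro i j hij
    exact absurd (Subsingleton.elim i j) hij

theorem Tl_addW {x W W' H : ℝ} (hW : 0 < W) (hW' : 0 < W') (h : Tl x W H) (h' : Tl x W' H) :
    Tl x (W + W') H := by
  intro u v
  have := tiledBy_union (h u v) (h' (u + W) v) (by
    rw [interior_prod_eq, interior_prod_eq, interior_Icc, interior_Icc, interior_Icc,
      Set.disjoint_left]
    rintro ⟨s, t⟩ ⟨⟨_, h1⟩, _⟩ ⟨⟨h2, _⟩, _⟩
    exact lt_asymm h1 h2)
  rwa [← Set.union_prod, Set.Icc_union_Icc_eq_Icc (by linarith) (by linarith), add_assoc] at this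

theorem Tl_addH {x W H H' : ℝ} (hH : 0 < H) (hH' : 0 < H') (h : Tl x W H) (h' : Tl x W H') :
    Tl x W (H + H') := by
  intro u v
  have := tiledBy_union (h u v) (h' u (v + H)) (by
    rw [interior_prod_eq, interior_prod_eq, interior_Icc, interior_Icc, interior_Icc,
      Set.disjoint_left]
    rintro ⟨s, t⟩ ⟨_, ⟨_, h1⟩⟩ ⟨_, ⟨h2, _⟩⟩
    exact lt_asymm h1 h2)
  rwa [← Set.prod_union, Set.Icc_union_Icc_eq_Icc (by linarith) (by linarith), add_assoc] at this

theorem Tl_mulW {x W H : ℝ} (hW : 0 < W) (h : Tl x W H) (n : ℕ) :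
    Tl x (((n + 1 : ℕ) : ℝ) * W) H := by
  induction n with
  | zero => simpa using h
  | succ k ih =>
    have := Tl_addW (by positivity) hW ih h
    have e : (((k + 1 + 1 : ℕ) : ℝ) * W) = ((k + 1 : ℕ) : ℝ) * W + W := by push_cast; ring
    rwa [e]

theorem Tl_mulH {x W H : ℝ} (hH : 0 < H) (h : Tl x W H) (n : ℕ) :
    Tl x W (((n + 1 : ℕ) : ℝ) * H) := by
  induction n with
  | zero => simpa using h
  | succ k ih =>
    have := Tl_addH (by positivity) hH ih h
    have e : (((k + 1 + 1 : ℕ) : ℝ) * H) = ((k + 1 : ℕ) : ℝ) * H + H := by push_cast; ring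
    rwa [e]

theorem Tl_rat {x W H : ℝ} (hW : 0 < W) (hH : 0 < H) (h : Tl x W H) (q : ℚ) (hq : 0 < q) :
    ∃ c : ℝ, 0 < c ∧ Tl x (c * (q * W)) (c * H) := by
  obtain ⟨s, hs⟩ : ∃ s : ℕ, q.num = ((s + 1 : ℕ) : ℤ) :=
    ⟨q.num.toNat - 1, by have := Rat.num_pos.2 hq; omega⟩
  obtain ⟨t, ht⟩ : ∃ t : ℕ, q.den = t + 1 := ⟨q.den - 1, by have := q.den_pos; omega⟩
  refine ⟨((t + 1 : ℕ) : ℝ), by positivity, ?_⟩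
  have := Tl_mulH hH (Tl_mulW hW h s) t
  have e : ((t + 1 : ℕ) : ℝ) * ((q : ℝ) * W) = ((s + 1 : ℕ) : ℝ) * W := by
    have h1 : (q : ℝ) = ((s + 1 : ℕ) : ℝ) / ((t + 1 : ℕ) : ℝ) := by
      rw [Rat.cast_def, hs, ht, Int.cast_natCast]
    rw [h1]
    have : ((t + 1 : ℕ) : ℝ) ≠ 0 := by positivity
    field_simp
  rwa [e]

theorem BSet_of_Tl {x W H : ℝ} (hW : 0 < W) (hH : 0 < H) (h : Tl x W H) : W / H ∈ BSet {x} :=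
  ⟨W, H, _, ⟨hW, hH, 0, 0, rfl⟩, Or.inl rfl, h 0 0⟩

/-- Lemma 5: if `x = a + b√p > 0` and its conjugate `a - b√p < 0`, then
`b√p - a ∈ B(x)` and `q√p ∈ B(x)` for every positive rational `q`. -/
theorem stmt_8 (p : ℚ) (hp : 0 < p) (hirr : Irrational (Real.sqrt p))
    (a b : ℚ) (x : ℝ) (hx : x = (a : ℝ) + (b : ℝ) * Real.sqrt p)
    (hxpos : 0 < x) (hconj : (a : ℝ) - (b : ℝ) * Real.sqrt p < 0) :
    ((b : ℝ) * Real.sqrt p - (a : ℝ) ∈ BSet {x}) ∧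
      ∀ q : ℚ, 0 < q → (q : ℝ) * Real.sqrt p ∈ BSet {x} := by
  have hs : Real.sqrt p * Real.sqrt p = (p : ℝ) := Real.mul_self_sqrt (by exact_mod_cast hp.le)
  have hsp : 0 < Real.sqrt p := Real.sqrt_pos.2 (by exact_mod_cast hp)
  set y : ℝ := (b : ℝ) * Real.sqrt p - (a : ℝ) with hy
  have hypos : 0 < y := by linarith
  have hxy : x * y = ((b ^ 2 * p - a ^ 2 : ℚ) : ℝ) := by
    push_cast
    rw [hx, hy]; linear_combination (b : ℝ) ^ 2 * hs
  have hr : 0 < b ^ 2 * p - a ^ 2 := by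
    have : (0 : ℝ) < ((b ^ 2 * p - a ^ 2 : ℚ) : ℝ) := hxy ▸ mul_pos hxpos hypos
    exact_mod_cast this
  have hb : 0 < b := by
    have h1 : 0 < (b : ℝ) * Real.sqrt p := by linarith
    exact_mod_cast pos_of_mul_pos_left h1 hsp.le
  have hY : ∀ d : ℝ, 0 < d → ∃ c : ℝ, 0 < c ∧ Tl x (c * d * y) (c * d) := by
    intro d hd
    obtain ⟨c, hc, h⟩ := Tl_rat (x := x) (W := d / x) (H := d) (by positivity) hd
      (Tl_base (by positivity) hd (Or.inr (by field_simp))) _ hr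
    refine ⟨c, hc, ?_⟩
    rw [← hxy] at h
    have e : c * (x * y * (d / x)) = c * d * y := by field_simp
    rwa [e] at h
  obtain ⟨c, hc, h⟩ := hY 1 one_pos
  rw [mul_one] at h
  constructor
  · have := BSet_of_Tl (by positivity) hc h
    rwa [mul_div_cancel_left₀ _ hc.ne'] at this
  · intro q hq
    have h2 := Tl_addW (by positivity) (by positivity) h
      (Tl_base (x := x) (W := c * x) (H := c) (by positivity) hc (Or.inl (by field_simp)))
    have hq' : (0 : ℝ) < ((q / (2 * b) : ℚ) : ℝ) := by exact_mod_cast (by positivity)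
    obtain ⟨k, hk, h3⟩ := Tl_rat (by positivity) hc h2 (q / (2 * b)) (by positivity)
    have := BSet_of_Tl (by positivity) (by positivity) h3
    have hb' : (b : ℝ) ≠ 0 := by exact_mod_cast hb.ne'
    have e : k * (((q / (2 * b) : ℚ) : ℝ) * (c * y + c * x)) / (k * c) = q * Real.sqrt p := by
      have : c * y + c * x = c * (2 * b * Real.sqrt p) := by rw [hx, hy]; ring
      rw [this]; push_cast; field_simp
    rwa [e] at this
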